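/- For any two weights 0 < w < w′ < 1 there exists a unique indifference threshold θ* ∈ (w, w′) such that L(w | θ*) = L(w′ | θ*). Moreover, for all θ < θ* one has L(w | θ) < L(w′ | θ), and for all θ > θ* one has L(w | θ) > L(w′ | θ). -/

import Mathlib

open MeasureTheory Set

/-- `Hfun f₁ f₂ w = E[X₂² · 1{(1−w)X₂² < wX₁²}]` for independent `X₁ ∼ f₁`, `X₂ ∼ f₂`,
written as a double integral against the product density. -/
noncomputable def Hfun (f₁ f₂ : ℝ → ℝ) (w : ℝ) : ℝ :=
  ∫ x₁ : ℝ, (∫ x₂ : ℝ, (if (1 - w) * x₂ ^ 2 < w * x₁ ^ 2 then x₂ ^ 2 else 0) * f₂ x₂) * f₁ x₁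

/-- `Gfun f₁ f₂ w = E[X₁² · 1{(1−w)X₂² ≥ wX₁²}]` for independent `X₁ ∼ f₁`, `X₂ ∼ f₂`,
written as a double integral against the product density. -/
noncomputable def Gfun (f₁ f₂ : ℝ → ℝ) (w : ℝ) : ℝ :=
  ∫ x₁ : ℝ, (∫ x₂ : ℝ, (if w * x₁ ^ 2 ≤ (1 - w) * x₂ ^ 2 then x₁ ^ 2 else 0) * f₂ x₂) * f₁ x₁

/-- The receiver's expected loss `L(w ∣ θ) = θ·G(w) + (1−θ)·H(w)`. -/
noncomputable def Lfun (f₁ f₂ : ℝ → ℝ) (w θ : ℝ) : ℝ :=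
  θ * Gfun f₁ f₂ w + (1 - θ) * Hfun f₁ f₂ w

/-- A probability density on `ℝ` that is continuous, everywhere positive, symmetric about `0`,
and has a finite second moment. -/
def GoodDensity (f : ℝ → ℝ) : Prop :=
  Continuous f ∧ (∀ x, 0 < f x) ∧ (∀ x, f (-x) = f x) ∧
    (∫ x : ℝ, f x) = 1 ∧ Integrable fun x : ℝ => x ^ 2 * f x

lemma aux_int (f₁ f₂ : ℝ → ℝ) (hf₁ : GoodDensity f₁) (hf₂ : GoodDensity f₂) :
    Integrable (fun z : ℝ × ℝ => z.1 ^ 2 * f₂ z.2 * f₁ z.1) (volume.prod volume) ∧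
    Integrable (fun z : ℝ × ℝ => z.2 ^ 2 * f₂ z.2 * f₁ z.1) (volume.prod volume) := by
  obtain ⟨c1, p1, -, i1, m1⟩ := hf₁
  obtain ⟨c2, p2, -, i2, m2⟩ := hf₂
  have h1 : Integrable f₁ := Integrable.of_integral_ne_zero (by rw [i1]; norm_num)
  have h2 : Integrable f₂ := Integrable.of_integral_ne_zero (by rw [i2]; norm_num)
  constructor
  · refine (m1.mul_prod h2).congr (Filter.Eventually.of_forall fun z => ?_)
    simp only
    ring
  · refine (h1.mul_prod m2).congr (Filter.Eventually.of_forall fun z => ?_)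
    simp only
    ring

lemma aux_ite {F : ℝ × ℝ → ℝ} (c d : ℝ × ℝ → ℝ) (P : ℝ × ℝ → Prop) [DecidablePred P]
    (hP : MeasurableSet {z | P z}) (a : ℝ × ℝ → ℝ)
    (h : Integrable (fun z => a z * c z * d z) (volume.prod volume))
    (hF : F = fun z => (if P z then a z else 0) * c z * d z) :
    Integrable F (volume.prod volume) := by
  refine (h.indicator hP).congr (Filter.Eventually.of_forall fun z => ?_)
  subst hF
  by_cases hz : P z <;> simp [Set.indicator, hz]

lemma aux_H (f₁ f₂ : ℝ → ℝ) (hf₁ : GoodDensity f₁) (hf₂ : GoodDensity f₂) (w : ℝ) :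
    Integrable (fun z : ℝ × ℝ =>
      (if (1 - w) * z.2 ^ 2 < w * z.1 ^ 2 then z.2 ^ 2 else 0) * f₂ z.2 * f₁ z.1)
        (volume.prod volume) ∧
    Hfun f₁ f₂ w = ∫ z : ℝ × ℝ,
      (if (1 - w) * z.2 ^ 2 < w * z.1 ^ 2 then z.2 ^ 2 else 0) * f₂ z.2 * f₁ z.1
        ∂(volume.prod volume) := by
  have h := aux_ite (fun z => f₂ z.2) (fun z => f₁ z.1)
    (fun z => (1 - w) * z.2 ^ 2 < w * z.1 ^ 2)
    (measurableSet_lt (by fun_prop) (by fun_prop)) (fun z => z.2 ^ 2)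
    (aux_int f₁ f₂ hf₁ hf₂).2 rfl
  refine ⟨h, ?_⟩
  rw [integral_prod _ h, Hfun]
  simp only [integral_mul_const]

lemma aux_G (f₁ f₂ : ℝ → ℝ) (hf₁ : GoodDensity f₁) (hf₂ : GoodDensity f₂) (w : ℝ) :
    Integrable (fun z : ℝ × ℝ =>
      (if w * z.1 ^ 2 ≤ (1 - w) * z.2 ^ 2 then z.1 ^ 2 else 0) * f₂ z.2 * f₁ z.1)
        (volume.prod volume) ∧
    Gfun f₁ f₂ w = ∫ z : ℝ × ℝ,
      (if w * z.1 ^ 2 ≤ (1 - w) * z.2 ^ 2 then z.1 ^ 2 else 0) * f₂ z.2 * f₁ z.1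
        ∂(volume.prod volume) := by
  have h := aux_ite (fun z => f₂ z.2) (fun z => f₁ z.1)
    (fun z => w * z.1 ^ 2 ≤ (1 - w) * z.2 ^ 2)
    (measurableSet_le (by fun_prop) (by fun_prop)) (fun z => z.1 ^ 2)
    (aux_int f₁ f₂ hf₁ hf₂).1 rfl
  refine ⟨h, ?_⟩
  rw [integral_prod _ h, Gfun]
  simp only [integral_mul_const]

lemma aux_pos (F : ℝ × ℝ → ℝ) (hF : Integrable F (volume.prod volume)) (h0 : ∀ z, 0 ≤ F z)
    (w w' : ℝ) (hw : 0 < w) (hww' : w < w') (hw' : w' < 1)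
    (hp : ∀ z : ℝ × ℝ, w * z.1 ^ 2 < (1 - w) * z.2 ^ 2 → (1 - w') * z.2 ^ 2 < w' * z.1 ^ 2 →
      0 < F z) : 0 < ∫ z, F z ∂(volume.prod volume) := by
  rw [integral_pos_iff_support_of_nonneg h0 hF]
  let U : Set (ℝ × ℝ) :=
    {z | w * z.1 ^ 2 < (1 - w) * z.2 ^ 2} ∩ {z | (1 - w') * z.2 ^ 2 < w' * z.1 ^ 2}
  have hU : IsOpen U := (isOpen_lt (by fun_prop) (by fun_prop)).inter
    (isOpen_lt (by fun_prop) (by fun_prop))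
  have hne : U.Nonempty := by
    refine ⟨(√(1 - (w + w') / 2), √((w + w') / 2)), ?_, ?_⟩
    · simp only [mem_ofPred_eq]
      rw [Real.sq_sqrt (by linarith), Real.sq_sqrt (by linarith)]
      nlinarith
    · simp only [mem_ofPred_eq]
      rw [Real.sq_sqrt (by linarith), Real.sq_sqrt (by linarith)]
      nlinarith
  refine (hU.measure_pos _ hne).trans_le (measure_mono fun z hz => ?_)
  exact (hp z hz.1 hz.2).ne'

/-- Pointwise comparison: the loss difference at `θ`. -/
lemma aux_diff (f₁ f₂ : ℝ → ℝ) (hf₁ : GoodDensity f₁) (hf₂ : GoodDensity f₂)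
    (w w' : ℝ) (hw : 0 < w) (hww' : w < w') (hw' : w' < 1) :
    0 < (1 - w) * (Hfun f₁ f₂ w' - Hfun f₁ f₂ w) - w * (Gfun f₁ f₂ w - Gfun f₁ f₂ w') ∧
    0 < w' * (Gfun f₁ f₂ w - Gfun f₁ f₂ w') - (1 - w') * (Hfun f₁ f₂ w' - Hfun f₁ f₂ w) := by
  obtain ⟨iH, eH⟩ := aux_H f₁ f₂ hf₁ hf₂ w
  obtain ⟨iH', eH'⟩ := aux_H f₁ f₂ hf₁ hf₂ w'
  obtain ⟨iG, eG⟩ := aux_G f₁ f₂ hf₁ hf₂ w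
  obtain ⟨iG', eG'⟩ := aux_G f₁ f₂ hf₁ hf₂ w'
  have p1 := hf₁.2.1
  have p2 := hf₂.2.1
  have mono : ∀ z : ℝ × ℝ, (1 - w) * z.2 ^ 2 < w * z.1 ^ 2 →
      (1 - w') * z.2 ^ 2 < w' * z.1 ^ 2 := fun z hz => by
    nlinarith [sq_nonneg z.1, sq_nonneg z.2]
  rw [eH, eH', eG, eG', ← integral_sub iH' iH, ← integral_sub iG iG']
  simp only [← integral_const_mul]
  have jH := iH'.sub' iH
  have jG := iG.sub' iG'
  rw [← integral_sub (jH.const_mul (1 - w)) (jG.const_mul w),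
    ← integral_sub (jG.const_mul w') (jH.const_mul (1 - w'))]
  have key : ∀ (α β : ℝ) (z : ℝ × ℝ),
      α * ((if (1 - w') * z.2 ^ 2 < w' * z.1 ^ 2 then z.2 ^ 2 else 0) * f₂ z.2 * f₁ z.1 -
        (if (1 - w) * z.2 ^ 2 < w * z.1 ^ 2 then z.2 ^ 2 else 0) * f₂ z.2 * f₁ z.1) -
      β * ((if w * z.1 ^ 2 ≤ (1 - w) * z.2 ^ 2 then z.1 ^ 2 else 0) * f₂ z.2 * f₁ z.1 -
        (if w' * z.1 ^ 2 ≤ (1 - w') * z.2 ^ 2 then z.1 ^ 2 else 0) * f₂ z.2 * f₁ z.1) =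
      if w * z.1 ^ 2 ≤ (1 - w) * z.2 ^ 2 ∧ (1 - w') * z.2 ^ 2 < w' * z.1 ^ 2 then
        (α * z.2 ^ 2 - β * z.1 ^ 2) * (f₂ z.2 * f₁ z.1) else 0 := by
    intro α β z
    by_cases h1 : (1 - w) * z.2 ^ 2 < w * z.1 ^ 2
    · have h2 := mono z h1
      simp [h1, h2, not_le.2 h1, not_le.2 h2]
    · by_cases h2 : (1 - w') * z.2 ^ 2 < w' * z.1 ^ 2
      · simp only [h1, h2, not_lt.1 h1, not_le.2 h2, if_true, if_false, and_self]
        ring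
      · simp [h1, h2, not_lt.1 h1, not_lt.1 h2]
  constructor
  · refine aux_pos _ ((jH.const_mul (1 - w)).sub' (jG.const_mul w)) (fun z => ?_) w w' hw hww' hw'
      fun z h1 h2 => ?_
    · have := mul_pos (p2 z.2) (p1 z.1)
      rw [key]
      split_ifs with h
      · exact mul_nonneg (by linarith [h.1]) this.le
      · exact le_rfl
    · have := mul_pos (p2 z.2) (p1 z.1)
      rw [key, if_pos ⟨h1.le, h2⟩]
      exact mul_pos (by linarith) this
  · have key' := fun z => key (-(1 - w')) (-w') z
    refine aux_pos _ ((jG.const_mul w').sub' (jH.const_mul (1 - w'))) (fun z => ?_) w w' hw hww' hw'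
      fun z h1 h2 => ?_
    · have := mul_pos (p2 z.2) (p1 z.1)
      have k := key' z
      refine le_of_le_of_eq ?_ (k.symm.trans (by ring))
      split_ifs with h
      · exact mul_nonneg (by linarith [h.2]) this.le
      · exact le_rfl
    · have := mul_pos (p2 z.2) (p1 z.1)
      have k := (key' z).trans (if_pos ⟨h1.le, h2⟩)
      refine lt_of_lt_of_eq ?_ (k.symm.trans (by ring))
      exact mul_pos (by linarith) this

/-- For any two weights `0 < w < w′ < 1` there exists a unique
indifference threshold `θ* ∈ (w, w′)` with `L(w∣θ*) = L(w′∣θ*)`. Moreover, for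
`θ ∈ [0,1]` with `θ < θ*` one has `L(w∣θ) < L(w′∣θ)`, and for `θ > θ*` one has
`L(w∣θ) > L(w′∣θ)`. -/
theorem stmt10 (f₁ f₂ : ℝ → ℝ) (hf₁ : GoodDensity f₁) (hf₂ : GoodDensity f₂)
    (w w' : ℝ) (hw : 0 < w) (hww' : w < w') (hw' : w' < 1) :
    ∃ θs : ℝ, θs ∈ Set.Ioo w w' ∧ Lfun f₁ f₂ w θs = Lfun f₁ f₂ w' θs ∧
      (∀ θ ∈ Set.Ioo w w', Lfun f₁ f₂ w θ = Lfun f₁ f₂ w' θ → θ = θs) ∧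
      (∀ θ ∈ Set.Icc (0 : ℝ) 1, θ < θs → Lfun f₁ f₂ w θ < Lfun f₁ f₂ w' θ) ∧
      (∀ θ ∈ Set.Icc (0 : ℝ) 1, θs < θ → Lfun f₁ f₂ w' θ < Lfun f₁ f₂ w θ) := by
  obtain ⟨a, b⟩ := aux_diff f₁ f₂ hf₁ hf₂ w w' hw hww' hw'
  have hL : ∀ θ, Lfun f₁ f₂ w' θ - Lfun f₁ f₂ w θ =
      (1 - θ) * (Hfun f₁ f₂ w' - Hfun f₁ f₂ w) - θ * (Gfun f₁ f₂ w - Gfun f₁ f₂ w') := by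
    intro θ
    simp only [Lfun]
    ring
  generalize Hfun f₁ f₂ w' - Hfun f₁ f₂ w = h at *
  generalize Gfun f₁ f₂ w - Gfun f₁ f₂ w' = g at *
  have hs : 0 < h + g := by
    have h3 : 0 < (w' - w) * (h + g) := by nlinarith
    exact pos_of_mul_pos_right h3 (by linarith)
  have hL' : ∀ θ, Lfun f₁ f₂ w' θ - Lfun f₁ f₂ w θ = (h / (h + g) - θ) * (h + g) := by
    intro θ
    rw [hL]
    field_simp
    ring
  refine ⟨h / (h + g), ⟨?_, ?_⟩, ?_, ?_, ?_, ?_⟩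
  · rw [lt_div_iff₀ hs]; linarith
  · rw [div_lt_iff₀ hs]; linarith
  · have := hL' (h / (h + g))
    rw [sub_self, zero_mul] at this
    linarith
  · intro θ _ e
    have := hL' θ
    rw [e, sub_self] at this
    rcases mul_eq_zero.1 this.symm with h | h <;> linarith
  · intro θ _ e
    have := mul_pos (sub_pos.2 e) hs
    linarith [hL' θ]
  · intro θ _ e
    have := mul_pos (sub_pos.2 e) hs
    linarith [hL' θ]
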